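/- For a multispindle X, the map α(x₀,x₁,…,xₙ) = (x₀, x₁−x₀, …, xₙ−x_{n−1}) (extended multilinearly) induces a well-defined chain map C^N(X) → C(X) splitting the quotient β : C(X) → C^N(X) = C(X)/C^D(X); consequently Hₙ(X) ≅ Hₙ^D(X) ⊕ Hₙ^N(X). -/

import Mathlib

/-- The `i`-th face map on tuples, for a binary operation `⋆`. -/
def dFun {X : Type*} (op : X → X → X) (n : ℕ) (i : Fin (n+1)) (x : Fin (n+1) → X) :
    Fin n → X :=
  fun j => if (j : ℕ) < (i : ℕ) then op (x j.castSucc) (x i) else x j.succ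

/-- The `j`-th degeneracy on tuples: `sⱼ(x₀,…,xₙ) = (x₀,…,xⱼ,xⱼ,…,xₙ)`. -/
def sFun {X : Type*} (n : ℕ) (j : Fin (n+1)) (x : Fin (n+1) → X) : Fin (n+2) → X :=
  fun m => if h : (m : ℕ) ≤ (j : ℕ) then x ⟨m, Nat.lt_of_le_of_lt h j.isLt⟩
           else x ⟨(m : ℕ) - 1, by have := m.isLt; omega⟩

/-- The chain group `Cₙ = ℤ X^{n+1}`. -/
abbrev CC (X : Type*) (n : ℕ) := (Fin (n+1) → X) →₀ ℤ

/-- The multi-term boundary `∂ = Σᵢ (−1)ⁱ Σᵣ aᵣ dᵢ^{⋆ᵣ} : Cₙ₊₁ → Cₙ`. -/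
noncomputable def bdL {X : Type*} {k : ℕ} (ops : Fin k → X → X → X) (a : Fin k → ℤ) (n : ℕ) :
    CC X (n+1) →ₗ[ℤ] CC X n :=
  ∑ i : Fin (n+2), ∑ r : Fin k,
    (((-1 : ℤ) ^ (i : ℕ)) * a r) • Finsupp.lmapDomain ℤ ℤ (dFun (ops r) (n+1) i)

/-- The degenerate submodule `C^D`, spanned by images of the degeneracy maps. -/
noncomputable def Dsub {X : Type*} : (n : ℕ) → Submodule ℤ (CC X n)
  | 0 => ⊥
  | n+1 => Submodule.span ℤ
      {y | ∃ (j : Fin (n+1)) (x : Fin (n+1) → X), y = Finsupp.single (sFun n j x) (1 : ℤ)}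

/-- The value of `α` on a basis tuple: `α(x₀,…,xₙ) = (x₀, x₁−x₀, …, xₙ−x_{n−1})`,
expanded multilinearly. -/
noncomputable def alphaB {X : Type*} (n : ℕ) (x : Fin (n+1) → X) : CC X n :=
  ∑ ε : Fin (n+1) → Bool,
    if ε 0 then 0
    else ((-1 : ℤ) ^ (Finset.univ.filter fun i => ε i = true).card) •
      Finsupp.single (fun i : Fin (n+1) =>
        if ε i then x ⟨(i : ℕ) - 1, by have := i.isLt; omega⟩ else x i) 1

/-- The linear map `α : Cₙ → Cₙ`. -/
noncomputable def alphaL {X : Type*} (n : ℕ) : CC X n →ₗ[ℤ] CC X n :=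
  Finsupp.linearCombination ℤ (alphaB n)

/-- The cycles of `C(X)`: everything in degree `0`, `ker ∂` above. -/
noncomputable def ZC {X : Type*} {k : ℕ} (ops : Fin k → X → X → X) (a : Fin k → ℤ) :
    (n : ℕ) → Submodule ℤ (CC X n)
  | 0 => ⊤
  | n+1 => LinearMap.ker (bdL ops a n)

/-- The `n`-th homology `Hₙ(X)`. -/
noncomputable abbrev HC {X : Type*} {k : ℕ} (ops : Fin k → X → X → X) (a : Fin k → ℤ)
    (n : ℕ) :=
  ZC ops a n ⧸ Submodule.comap (ZC ops a n).subtype (LinearMap.range (bdL ops a n))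

/-- The cycles of the degenerate subcomplex `C^D`. -/
noncomputable def ZD {X : Type*} {k : ℕ} (ops : Fin k → X → X → X) (a : Fin k → ℤ) :
    (n : ℕ) → Submodule ℤ (CC X n)
  | 0 => ⊥
  | n+1 => LinearMap.ker (bdL ops a n) ⊓ Dsub (n+1)

/-- The `n`-th degenerate homology `Hₙ^D(X) = Hₙ(C^D)`. -/
noncomputable abbrev HD {X : Type*} {k : ℕ} (ops : Fin k → X → X → X) (a : Fin k → ℤ)
    (n : ℕ) :=
  ZD ops a n ⧸
    Submodule.comap (ZD ops a n).subtype (Submodule.map (bdL ops a n) (Dsub (n+1)))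

/-- The cycles of the normalized complex `C^N = C/C^D`: chains whose boundary is
degenerate. -/
noncomputable def ZN {X : Type*} {k : ℕ} (ops : Fin k → X → X → X) (a : Fin k → ℤ) :
    (n : ℕ) → Submodule ℤ (CC X n)
  | 0 => ⊤
  | n+1 => Submodule.comap (bdL ops a n) (Dsub n)

/-- The `n`-th normalized homology `Hₙ^N(X) = Hₙ(C/C^D)`. -/
noncomputable abbrev HN {X : Type*} {k : ℕ} (ops : Fin k → X → X → X) (a : Fin k → ℤ)
    (n : ℕ) :=
  ZN ops a n ⧸
    Submodule.comap (ZN ops a n).subtype (Dsub n ⊔ LinearMap.range (bdL ops a n))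

/-! For `j ≥ 1`, inclusion-exclusion shows that deleting the `j`-th coordinate kills every chain in
the image of `α`. Conversely, every term of `α c` other than `c` itself is degenerate, and it does
not depend on some coordinate `j ≥ 1`, so `α` is the identity on the submodule `K` of chains killed
by all these deletions. Hence `α` is the projection onto `K` along `C^D`. The boundary preserves
both `K` (a face map followed by a deletion forgets a coordinate `j ≥ 1`) and `C^D` (the two faces
at a repetition cancel), so it commutes with `α`, and the homology splits along `C = C^D ⊕ K`. -/

section Algebra

theorem sum_neg_one_pow_card_smul_eq_zero {ι M : Type*} [Fintype ι] [DecidableEq ι]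
    [AddCommGroup M] (p : ι) {f : Finset ι → M} (hf : ∀ s, p ∉ s → f (insert p s) = f s) :
    ∑ s : Finset ι, (-1 : ℤ) ^ s.card • f s = 0 := by
  rw [← Finset.powerset_univ, ← Finset.insert_erase (Finset.mem_univ p),
    Finset.sum_powerset_insert (Finset.notMem_erase p _), ← Finset.sum_add_distrib]
  refine Finset.sum_eq_zero fun s hs => ?_
  have hp : p ∉ s := fun h => Finset.notMem_erase p _ (Finset.mem_powerset.1 hs h)
  rw [hf s hp, Finset.card_insert_of_notMem hp, pow_succ, mul_neg_one, neg_smul, add_neg_cancel]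

theorem sum_neg_one_pow_smul_mem {M : Type*} [AddCommGroup M] {S : Submodule ℤ M} {n : ℕ}
    (j : Fin n) {f : Fin (n + 1) → M} (hj : f j.castSucc = f j.succ)
    (hf : ∀ i, i ≠ j.castSucc → i ≠ j.succ → f i ∈ S) :
    ∑ i : Fin (n + 1), (-1 : ℤ) ^ (i : ℕ) • f i ∈ S := by
  have hne : j.succ ∈ Finset.univ.erase j.castSucc := by simp [Fin.castSucc_lt_succ.ne']
  rw [← Finset.add_sum_erase _ _ (Finset.mem_univ j.castSucc), ← Finset.add_sum_erase _ _ hne,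
    ← add_assoc, hj, Fin.val_castSucc, Fin.val_succ, pow_succ, mul_neg_one, neg_smul,
    add_neg_cancel, zero_add]
  refine S.sum_mem fun i hi => S.smul_mem _ (hf i ?_ ?_)
  · exact Finset.ne_of_mem_erase (Finset.mem_of_mem_erase hi)
  · exact Finset.ne_of_mem_erase hi

theorem lmapDomain_eq_zero_of_factorsThrough {R M A B C : Type*} [Semiring R]
    [AddCommMonoid M] [Module R M] {f : A → B} {g : A → C} (hfg : f.FactorsThrough g) {c : A →₀ M}
    (hc : Finsupp.lmapDomain M R g c = 0) : Finsupp.lmapDomain M R f c = 0 := by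
  cases isEmpty_or_nonempty B with
  | inl _ => exact Subsingleton.elim _ _
  | inr _ =>
    obtain ⟨e, rfl⟩ := (Function.factorsThrough_iff f).1 hfg
    rw [Finsupp.lmapDomain_comp, LinearMap.comp_apply, hc, map_zero]

theorem factorsThrough_removeNth {n : ℕ} {X A : Type*} {p : Fin (n + 1)}
    {F : (Fin (n + 1) → X) → A} (hF : DependsOn F {p}ᶜ) :
    F.FactorsThrough (p.removeNth : (Fin (n + 1) → X) → Fin n → X) := by
  intro x y hxy
  refine hF fun i hi => ?_
  obtain ⟨m, rfl⟩ := Fin.exists_succAbove_eq hi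
  exact congrFun hxy m

theorem mem_iff_sub_apply_mem_and_mem_ker_sup {R M : Type*} [Ring R] [AddCommGroup M] [Module R M]
    {e : Module.End R M} {B : Submodule R M} (hB : B ≤ B.comap e) {z : M} :
    z ∈ B ↔ z - e z ∈ B ∧ z ∈ LinearMap.ker e ⊔ B := by
  refine ⟨fun hz => ⟨B.sub_mem hz (hB hz), Submodule.mem_sup_right hz⟩, fun ⟨hsub, hsup⟩ => ?_⟩
  obtain ⟨u, hu, b, hb, rfl⟩ := Submodule.mem_sup.1 hsup
  have heB : e (u + b) ∈ B := by
    rw [map_add, LinearMap.mem_ker.1 hu, zero_add]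
    exact hB hb
  simpa using B.add_mem hsub heB

theorem nonempty_quotient_equiv_prod_of_isIdempotentElem {R M : Type*} [Ring R] [AddCommGroup M]
    [Module R M] {e : Module.End R M} (he : IsIdempotentElem e) {Z B : Submodule R M}
    (hZ : Z ≤ Z.comap e) (hB : B ≤ B.comap e) :
    Nonempty ((Z ⧸ B.comap Z.subtype) ≃ₗ[R]
      (↥(Z ⊓ LinearMap.ker e) ⧸ (B ⊓ LinearMap.ker e).comap (Z ⊓ LinearMap.ker e).subtype) ×
        (Z.comap e ⧸ (LinearMap.ker e ⊔ B).comap (Z.comap e).subtype)) := by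
  have hee (x : M) : e (e x) = e x := LinearMap.congr_fun he x
  have hcompl : ∀ z ∈ Z, (1 - e) z ∈ Z ⊓ LinearMap.ker e := fun z hz =>
    ⟨Z.sub_mem hz (hZ hz), by simp [hee]⟩
  let toKer : Z →ₗ[R] ↥(Z ⊓ LinearMap.ker e) := (1 - e).restrict hcompl
  let φ := (((B ⊓ LinearMap.ker e).comap (Z ⊓ LinearMap.ker e).subtype).mkQ ∘ₗ toKer).prod
    (((LinearMap.ker e ⊔ B).comap (Z.comap e).subtype).mkQ ∘ₗ Submodule.inclusion hZ)
  have hker : LinearMap.ker φ = B.comap Z.subtype := by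
    ext ⟨z, hz⟩
    rw [Submodule.mem_comap, Submodule.subtype_apply, mem_iff_sub_apply_mem_and_mem_ker_sup hB]
    simp only [φ, toKer, LinearMap.ker_prod, LinearMap.ker_comp, Submodule.ker_mkQ,
      Submodule.mem_inf, Submodule.mem_comap, Submodule.subtype_apply, Submodule.inclusion_apply,
      LinearMap.coe_restrict_apply, LinearMap.sub_apply, Module.End.one_apply, LinearMap.mem_ker,
      map_sub, hee, sub_self, and_true]
  have hsurj : Function.Surjective φ := by
    rintro ⟨u, v⟩
    obtain ⟨⟨u, huZ, hu⟩, rfl⟩ := Submodule.mkQ_surjective _ u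
    obtain ⟨⟨v, hv⟩, rfl⟩ := Submodule.mkQ_surjective _ v
    have hu : e u = 0 := hu
    refine ⟨⟨u + e v, Z.add_mem huZ hv⟩, Prod.ext ?_ ?_⟩
    · refine congrArg (Submodule.mkQ _) (Subtype.ext ?_)
      simp [toKer, hu, hee]
    · refine (Submodule.Quotient.eq _).2 (Submodule.mem_sup_left ?_)
      simp [hu, hee]
  exact ⟨Submodule.quotEquivOfEq _ _ hker.symm ≪≫ₗ φ.quotKerEquivOfSurjective hsurj⟩

end Algebra

section Degenerate

variable {X : Type*} {n : ℕ}

/-- A tuple with two equal neighbours; these are the basis elements of the degenerate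
subcomplex. -/
def HasAdjacentRepeat (x : Fin (n + 1) → X) : Prop :=
  ∃ j : Fin n, x j.castSucc = x j.succ

theorem sFun_eq_comp_predAbove (j : Fin (n + 1)) (x : Fin (n + 1) → X) :
    sFun n j x = x ∘ j.predAbove := by
  funext m
  by_cases h : (m : ℕ) ≤ j
  · rw [Function.comp_apply, Fin.predAbove_of_le_castSucc j m h, sFun, dif_pos h]
    rfl
  · rw [Function.comp_apply, Fin.predAbove_of_castSucc_lt j m (not_le.1 h), sFun, dif_neg h]
    rfl

theorem hasAdjacentRepeat_iff_exists_sFun {y : Fin (n + 2) → X} :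
    HasAdjacentRepeat y ↔ ∃ (j : Fin (n + 1)) (x : Fin (n + 1) → X), y = sFun n j x := by
  simp only [sFun_eq_comp_predAbove]
  constructor
  · rintro ⟨j, hj⟩
    refine ⟨j, j.succ.removeNth y, funext fun m => ?_⟩
    rcases eq_or_ne m j.succ with rfl | hm
    · simp [Fin.removeNth, ← hj]
    · simp [Fin.removeNth, Fin.succ_succAbove_predAbove hm]
  · rintro ⟨j, x, rfl⟩
    exact ⟨j, by simp⟩

theorem Dsub_eq_span (n : ℕ) :
    (Dsub n : Submodule ℤ (CC X n)) =
      Submodule.span ℤ ((Finsupp.single · 1) '' {x | HasAdjacentRepeat x}) := by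
  cases n with
  | zero =>
    have : {x : Fin 1 → X | HasAdjacentRepeat x} = ∅ :=
      Set.eq_empty_of_forall_notMem fun _ ⟨j, _⟩ => j.elim0
    rw [this, Set.image_empty, Submodule.span_empty, Dsub]
  | succ n =>
    rw [Dsub]
    congr 1
    ext c
    constructor
    · rintro ⟨j, x, rfl⟩
      exact ⟨_, hasAdjacentRepeat_iff_exists_sFun.2 ⟨j, x, rfl⟩, rfl⟩
    · rintro ⟨y, hy, rfl⟩
      obtain ⟨j, x, rfl⟩ := hasAdjacentRepeat_iff_exists_sFun.1 hy
      exact ⟨j, x, rfl⟩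

theorem HasAdjacentRepeat.single_mem_Dsub {x : Fin (n + 1) → X} (hx : HasAdjacentRepeat x) :
    Finsupp.single x 1 ∈ Dsub n := by
  rw [Dsub_eq_span]
  exact Submodule.subset_span ⟨x, hx, rfl⟩

theorem Dsub_le {S : Submodule ℤ (CC X n)}
    (hS : ∀ x, HasAdjacentRepeat x → Finsupp.single x 1 ∈ S) : Dsub n ≤ S := by
  rw [Dsub_eq_span, Submodule.span_le]
  rintro _ ⟨x, hx, rfl⟩
  exact hS x hx

theorem lmapDomain_mem_Dsub {A : Type*} {F : A → Fin (n + 1) → X}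
    (hF : ∀ x, HasAdjacentRepeat (F x)) (c : A →₀ ℤ) :
    Finsupp.lmapDomain ℤ ℤ F c ∈ Dsub n := by
  rw [Finsupp.lmapDomain_apply, Finsupp.mapDomain, Finsupp.sum]
  refine Submodule.sum_mem _ fun x _ => ?_
  rw [← Finsupp.smul_single_one]
  exact Submodule.smul_mem _ _ (hF x).single_mem_Dsub

end Degenerate

section DeletionKernel

variable {X : Type*} {n : ℕ}

/-- The chains killed by deleting any one coordinate other than the zeroth. This is the image of
`α`, and a complement of the degenerate subcomplex. -/
noncomputable def deletionKernel (X : Type*) (n : ℕ) : Submodule ℤ (CC X n) :=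
  ⨅ j : Fin n, LinearMap.ker (Finsupp.lmapDomain ℤ ℤ fun x : Fin (n + 1) → X => j.succ.removeNth x)

theorem mem_deletionKernel {c : CC X n} :
    c ∈ deletionKernel X n ↔ ∀ j : Fin n,
      Finsupp.lmapDomain ℤ ℤ (fun x : Fin (n + 1) → X => j.succ.removeNth x) c = 0 := by
  simp [deletionKernel]

theorem lmapDomain_eq_zero_of_dependsOn {A : Type*} {c : CC X n} (hc : c ∈ deletionKernel X n)
    {p : Fin (n + 1)} (hp : p ≠ 0) {F : (Fin (n + 1) → X) → A} (hF : DependsOn F {p}ᶜ) :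
    Finsupp.lmapDomain ℤ ℤ F c = 0 := by
  obtain ⟨j, rfl⟩ := Fin.exists_succ_eq.2 hp
  exact lmapDomain_eq_zero_of_factorsThrough (factorsThrough_removeNth hF)
    (mem_deletionKernel.1 hc j)

end DeletionKernel

section Alpha

variable {X : Type*} {n : ℕ}

/-- The tuple obtained from `x` by replacing `x_{i+1}` by `x_i` for every `i ∈ s`. These are the
terms in the multilinear expansion of `(x₀, x₁ - x₀, …, xₙ - x_{n-1})`. -/
def copyPrev (s : Finset (Fin n)) (x : Fin (n + 1) → X) : Fin (n + 1) → X :=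
  Fin.cons (x 0) fun i => if i ∈ s then x i.castSucc else x i.succ

@[simp]
theorem copyPrev_zero (s : Finset (Fin n)) (x : Fin (n + 1) → X) : copyPrev s x 0 = x 0 :=
  rfl

@[simp]
theorem copyPrev_succ (s : Finset (Fin n)) (x : Fin (n + 1) → X) (i : Fin n) :
    copyPrev s x i.succ = if i ∈ s then x i.castSucc else x i.succ :=
  rfl

theorem copyPrev_empty (x : Fin (n + 1) → X) : copyPrev ∅ x = x := by
  funext i
  cases i using Fin.cases <;> simp

theorem copyPrev_insert (j : Fin n) (s : Finset (Fin n)) (x : Fin (n + 1) → X) :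
    copyPrev (insert j s) x = Function.update (copyPrev s x) j.succ (x j.castSucc) := by
  funext i
  cases i using Fin.cases with
  | zero => simp [Function.update_of_ne (Fin.succ_ne_zero j).symm]
  | succ i => rcases eq_or_ne i j with rfl | hij <;> simp [*]

theorem hasAdjacentRepeat_copyPrev {s : Finset (Fin n)} (hs : s.Nonempty)
    (x : Fin (n + 1) → X) : HasAdjacentRepeat (copyPrev s x) := by
  set j := s.min' hs
  have hj : copyPrev s x j.castSucc = x j.castSucc := by
    obtain h | ⟨i, h⟩ := Fin.eq_zero_or_eq_succ j.castSucc
    · rw [h, copyPrev_zero]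
    · have hi : i ∉ s := fun hi =>
        (s.min'_le i hi).not_gt (Fin.castSucc_lt_castSucc_iff.1 (h ▸ Fin.castSucc_lt_succ))
      rw [h, copyPrev_succ, if_neg hi]
  exact ⟨j, by rw [hj, copyPrev_succ, if_pos (s.min'_mem hs)]⟩

theorem dependsOn_copyPrev {s : Finset (Fin n)} (hs : s.Nonempty) :
    DependsOn (copyPrev (X := X) s) {(s.max' hs).succ}ᶜ := by
  intro x y hxy
  funext i
  cases i using Fin.cases with
  | zero => exact hxy 0 (Fin.succ_ne_zero _).symm
  | succ i =>
    rw [copyPrev_succ, copyPrev_succ]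
    split_ifs with hi
    · exact hxy _ (Fin.castSucc_lt_succ_iff.2 (s.le_max' i hi)).ne
    · refine hxy _ fun h => hi ?_
      rw [Fin.succ_injective _ h]
      exact s.max'_mem hs

theorem alphaB_eq_sum_copyPrev (x : Fin (n + 1) → X) :
    alphaB n x = ∑ s : Finset (Fin n), (-1 : ℤ) ^ s.card • Finsupp.single (copyPrev s x) 1 := by
  let e (s : Finset (Fin n)) : Fin (n + 1) → Bool := Fin.cons false (· ∈ s)
  have he : Function.Injective e := fun s t hst => by
    ext i
    simpa [e] using congrFun hst i.succ
  refine (Finset.sum_of_injOn e he.injOn (fun _ _ => Finset.mem_coe.2 (Finset.mem_univ _))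
    (fun ε _ hε => ?_) fun s _ => ?_).symm
  · refine if_pos (by_contra fun h0 => hε ⟨({i | ε i.succ} : Finset (Fin n)), by simp, ?_⟩)
    funext i
    cases i using Fin.cases <;> simp [e, h0]
  · have hcard : (Finset.univ.filter fun i => e s i = true).card = s.card := by
      simp [e, Fin.card_filter_univ_succ]
    rw [hcard, if_neg (by simp [e])]
    congr 2
    funext i
    cases i using Fin.cases with
    | zero => rfl
    | succ i =>
      simp only [e, Fin.cons_succ, decide_eq_true_iff]
      rfl

theorem alphaL_eq_sum_lmapDomain (n : ℕ) :
    alphaL (X := X) n =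
      ∑ s : Finset (Fin n), (-1 : ℤ) ^ s.card • Finsupp.lmapDomain ℤ ℤ (copyPrev s) := by
  refine Finsupp.lhom_ext' fun x => LinearMap.ext_ring ?_
  simp only [alphaL, LinearMap.comp_apply, Finsupp.lsingle_apply, LinearMap.sum_apply,
    LinearMap.smul_apply, Finsupp.linearCombination_single, one_smul, alphaB_eq_sum_copyPrev,
    Finsupp.lmapDomain_apply, Finsupp.mapDomain_single]

theorem alphaL_sub_self (c : CC X n) :
    alphaL n c - c = ∑ s ∈ Finset.univ.erase (∅ : Finset (Fin n)),
      (-1 : ℤ) ^ s.card • Finsupp.lmapDomain ℤ ℤ (copyPrev s) c := by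
  have hempty : copyPrev (X := X) (∅ : Finset (Fin n)) = id := funext copyPrev_empty
  simp only [alphaL_eq_sum_lmapDomain, LinearMap.sum_apply, LinearMap.smul_apply]
  rw [← Finset.add_sum_erase _ _ (Finset.mem_univ ∅), hempty, Finsupp.lmapDomain_id]
  simp

theorem alphaL_sub_self_mem_Dsub (c : CC X n) : alphaL n c - c ∈ Dsub n := by
  rw [alphaL_sub_self]
  refine Submodule.sum_mem _ fun s hs => Submodule.smul_mem _ _ ?_
  have hne := Finset.nonempty_iff_ne_empty.2 (Finset.ne_of_mem_erase hs)
  exact lmapDomain_mem_Dsub (hasAdjacentRepeat_copyPrev hne) c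

theorem alphaL_eq_self_of_mem_deletionKernel {c : CC X n} (hc : c ∈ deletionKernel X n) :
    alphaL n c = c := by
  rw [← sub_eq_zero, alphaL_sub_self]
  refine Finset.sum_eq_zero fun s hs => ?_
  have hne := Finset.nonempty_iff_ne_empty.2 (Finset.ne_of_mem_erase hs)
  rw [lmapDomain_eq_zero_of_dependsOn hc (Fin.succ_ne_zero _) (dependsOn_copyPrev hne), smul_zero]

theorem alphaL_mem_deletionKernel (c : CC X n) : alphaL n c ∈ deletionKernel X n := by
  refine mem_deletionKernel.2 fun j => ?_
  simp only [alphaL_eq_sum_lmapDomain, LinearMap.sum_apply, LinearMap.smul_apply, map_sum,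
    map_smul, ← LinearMap.comp_apply, ← Finsupp.lmapDomain_comp]
  refine sum_neg_one_pow_card_smul_eq_zero j fun s _ => ?_
  simp only [Function.comp_def, copyPrev_insert, Fin.removeNth_update]

theorem ker_alphaL (n : ℕ) : LinearMap.ker (alphaL (X := X) n) = Dsub n := by
  refine le_antisymm (fun c hc => ?_) (Dsub_le fun x ⟨j, hj⟩ => ?_)
  · simpa [LinearMap.mem_ker.1 hc] using alphaL_sub_self_mem_Dsub c
  · rw [LinearMap.mem_ker, alphaL, Finsupp.linearCombination_single, one_smul,
      alphaB_eq_sum_copyPrev]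
    refine sum_neg_one_pow_card_smul_eq_zero j fun s hs => ?_
    have hself : copyPrev s x j.succ = x j.castSucc := by rw [copyPrev_succ, if_neg hs, hj]
    rw [copyPrev_insert, ← hself, Function.update_eq_self]

theorem isIdempotentElem_alphaL (n : ℕ) : IsIdempotentElem (alphaL (X := X) n) :=
  LinearMap.ext fun c => alphaL_eq_self_of_mem_deletionKernel (alphaL_mem_deletionKernel c)

end Alpha

section Boundary

variable {X : Type*} {n k : ℕ}

theorem dFun_apply (op : X → X → X) (i : Fin (n + 1)) (x : Fin (n + 1) → X) (m : Fin n) :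
    dFun op n i x m =
      if m.castSucc < i then op (x (i.succAbove m)) (x i) else x (i.succAbove m) := by
  by_cases h : m.castSucc < i
  · rw [if_pos h, Fin.succAbove_of_castSucc_lt i m h]
    exact if_pos h
  · rw [if_neg h, Fin.succAbove_of_le_castSucc i m (not_lt.1 h)]
    exact if_neg h

theorem dependsOn_removeNth_dFun (op : X → X → X) (i : Fin (n + 2)) (j : Fin (n + 1)) :
    DependsOn (fun x => j.removeNth (dFun op (n + 1) i x)) {i.succAbove j}ᶜ := by
  intro x y hxy
  funext m
  have hm : x (i.succAbove (j.succAbove m)) = y (i.succAbove (j.succAbove m)) :=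
    hxy _ (Fin.succAbove_right_injective.ne (Fin.succAbove_ne j m))
  have hi : x i = y i := hxy i (Fin.succAbove_ne i j).symm
  simp only [Fin.removeNth, dFun_apply, hm, hi]

theorem dFun_castSucc_eq_dFun_succ {op : X → X → X} (hop : ∀ x, op x x = x)
    {x : Fin (n + 1) → X} {j : Fin n} (hj : x j.castSucc = x j.succ) :
    dFun op n j.castSucc x = dFun op n j.succ x := by
  funext m
  rcases lt_trichotomy m j with hm | rfl | hm
  · have hm : (m : ℕ) < j := hm
    simp [dFun, hj, hm, hm.trans (Nat.lt_succ_self _)]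
  · simp [dFun, hj, hop]
  · have hm : (j : ℕ) < m := hm
    simp [dFun, hm.not_gt, (Nat.succ_le_of_lt hm).not_gt]

theorem hasAdjacentRepeat_dFun (op : X → X → X) {x : Fin (n + 2) → X} {j : Fin (n + 1)}
    (hj : x j.castSucc = x j.succ) {i : Fin (n + 2)} (hi : i ≠ j.castSucc) (hi' : i ≠ j.succ) :
    HasAdjacentRepeat (dFun op (n + 1) i x) := by
  rcases lt_or_gt_of_ne hi with h | h
  · obtain ⟨m, rfl⟩ : ∃ m, Fin.succ m = j :=
      Fin.exists_succ_eq.2 (by rintro rfl; exact Fin.not_lt_zero i h)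
    have hmi : ¬ (m.castSucc : ℕ) < i := (Nat.le_of_lt_succ h).not_gt
    have hmi' : ¬ (m.succ : ℕ) < i := h.not_gt
    exact ⟨m, by rw [dFun, dFun, if_neg hmi, if_neg hmi']; exact hj⟩
  · have h' : j.succ < i := lt_of_le_of_ne (Fin.castSucc_lt_iff_succ_le.1 h) hi'.symm
    obtain ⟨m, rfl⟩ : ∃ m, Fin.castSucc m = j :=
      Fin.exists_castSucc_eq.2 (by rintro rfl; exact (Fin.le_last i).not_gt h')
    have hmi : (m.castSucc : ℕ) < i := h
    have hmi' : (m.succ : ℕ) < i := h'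
    exact ⟨m, by rw [dFun, dFun, if_pos hmi, if_pos hmi']; exact congrArg (op · (x i)) hj⟩

/-- The `i`-th face map `dᵢ = Σᵣ aᵣ dᵢ^{⋆ᵣ}` of the multi-term complex, so that
`∂ = Σᵢ (-1)ⁱ dᵢ`. -/
noncomputable def faceL (ops : Fin k → X → X → X) (a : Fin k → ℤ) (i : Fin (n + 2)) :
    CC X (n + 1) →ₗ[ℤ] CC X n :=
  ∑ r, a r • Finsupp.lmapDomain ℤ ℤ (dFun (ops r) (n + 1) i)

theorem bdL_eq_sum_faceL (ops : Fin k → X → X → X) (a : Fin k → ℤ) (n : ℕ) :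
    bdL ops a n = ∑ i : Fin (n + 2), (-1 : ℤ) ^ (i : ℕ) • faceL ops a i := by
  simp only [bdL, faceL, Finset.smul_sum, mul_smul]

theorem faceL_mem_deletionKernel (ops : Fin k → X → X → X) (a : Fin k → ℤ) (i : Fin (n + 2))
    {c : CC X (n + 1)} (hc : c ∈ deletionKernel X (n + 1)) :
    faceL ops a i c ∈ deletionKernel X n := by
  refine mem_deletionKernel.2 fun j => ?_
  simp only [faceL, LinearMap.sum_apply, LinearMap.smul_apply, map_sum, map_smul,
    ← LinearMap.comp_apply, ← Finsupp.lmapDomain_comp]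
  refine Finset.sum_eq_zero fun r _ => ?_
  have hdep := dependsOn_removeNth_dFun (ops r) i j.succ
  have hne : i.succAbove j.succ ≠ 0 := by
    rcases eq_or_ne i 0 with rfl | hi
    · rw [Fin.succAbove_zero]
      exact Fin.succ_ne_zero _
    · exact Fin.succAbove_ne_zero hi (Fin.succ_ne_zero j)
  exact (congrArg _ (lmapDomain_eq_zero_of_dependsOn hc hne hdep)).trans (smul_zero _)

theorem bdL_mem_deletionKernel (ops : Fin k → X → X → X) (a : Fin k → ℤ)
    {c : CC X (n + 1)} (hc : c ∈ deletionKernel X (n + 1)) :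
    bdL ops a n c ∈ deletionKernel X n := by
  simp only [bdL_eq_sum_faceL, LinearMap.sum_apply, LinearMap.smul_apply]
  exact Submodule.sum_mem _ fun i _ => Submodule.smul_mem _ _ (faceL_mem_deletionKernel ops a i hc)

variable {ops : Fin k → X → X → X} (a : Fin k → ℤ)

theorem bdL_mem_Dsub (hidem : ∀ (r : Fin k) (x : X), ops r x x = x)
    {c : CC X (n + 1)} (hc : c ∈ Dsub (n + 1)) : bdL ops a n c ∈ Dsub n := by
  suffices Dsub (n + 1) ≤ (Dsub n).comap (bdL ops a n) from this hc
  refine Dsub_le fun x ⟨j, hj⟩ => ?_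
  rw [Submodule.mem_comap, bdL_eq_sum_faceL, LinearMap.sum_apply]
  simp only [LinearMap.smul_apply]
  have hface (i : Fin (n + 2)) : faceL ops a i (Finsupp.single x 1) =
      ∑ r, a r • Finsupp.single (dFun (ops r) (n + 1) i x) 1 := by
    simp [faceL]
  refine sum_neg_one_pow_smul_mem j ?_ fun i hi hi' => ?_
  · simp only [hface, dFun_castSucc_eq_dFun_succ (hidem _) hj]
  · rw [hface]
    exact Submodule.sum_mem _ fun r _ =>
      Submodule.smul_mem _ _ (hasAdjacentRepeat_dFun (ops r) hj hi hi').single_mem_Dsub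

theorem alphaL_bdL (hidem : ∀ (r : Fin k) (x : X), ops r x x = x) (c : CC X (n + 1)) :
    alphaL n (bdL ops a n c) = bdL ops a n (alphaL (n + 1) c) := by
  have hdeg : bdL ops a n (alphaL (n + 1) c - c) ∈ LinearMap.ker (alphaL n) :=
    ker_alphaL (X := X) n ▸ bdL_mem_Dsub a hidem (alphaL_sub_self_mem_Dsub c)
  calc alphaL n (bdL ops a n c)
      = alphaL n (bdL ops a n (alphaL (n + 1) c)) := by
        rw [LinearMap.mem_ker, map_sub, map_sub, sub_eq_zero] at hdeg
        exact hdeg.symm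
    _ = bdL ops a n (alphaL (n + 1) c) :=
        alphaL_eq_self_of_mem_deletionKernel
          (bdL_mem_deletionKernel ops a (alphaL_mem_deletionKernel c))

end Boundary

section Homology

variable {X : Type*} {k : ℕ}

theorem ZD_eq_inf_ker (ops : Fin k → X → X → X) (a : Fin k → ℤ) (n : ℕ) :
    ZD ops a n = ZC ops a n ⊓ LinearMap.ker (alphaL n) := by
  rw [ker_alphaL]
  cases n with
  | zero => rw [ZD, ZC, Dsub, top_inf_eq]
  | succ n => rfl

variable {ops : Fin k → X → X → X} (a : Fin k → ℤ)

theorem ZN_eq_comap (hidem : ∀ (r : Fin k) (x : X), ops r x x = x) (n : ℕ) :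
    ZN ops a n = (ZC ops a n).comap (alphaL n) := by
  cases n with
  | zero => rfl
  | succ n =>
    ext c
    rw [ZN, ZC, Submodule.mem_comap, Submodule.mem_comap, ← ker_alphaL, LinearMap.mem_ker,
      LinearMap.mem_ker, alphaL_bdL a hidem]

theorem map_bdL_Dsub (hidem : ∀ (r : Fin k) (x : X), ops r x x = x) (n : ℕ) :
    (Dsub (n + 1)).map (bdL ops a n) =
      LinearMap.range (bdL ops a n) ⊓ LinearMap.ker (alphaL n) := by
  refine le_antisymm (le_inf LinearMap.map_le_range ?_) ?_
  · rw [ker_alphaL, Submodule.map_le_iff_le_comap]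
    exact fun c hc => bdL_mem_Dsub a hidem hc
  · rintro _ ⟨⟨c, rfl⟩, hc⟩
    refine ⟨c - alphaL (n + 1) c, ?_, ?_⟩
    · exact sub_mem_comm_iff.1 (alphaL_sub_self_mem_Dsub c)
    · rw [map_sub, ← alphaL_bdL a hidem, LinearMap.mem_ker.1 hc, sub_zero]

theorem ZC_le_comap_alphaL (hidem : ∀ (r : Fin k) (x : X), ops r x x = x) (n : ℕ) :
    ZC ops a n ≤ (ZC ops a n).comap (alphaL n) := by
  cases n with
  | zero => exact le_top
  | succ n =>
    intro c hc
    rw [ZC, LinearMap.mem_ker] at hc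
    rw [ZC, Submodule.mem_comap, LinearMap.mem_ker, ← alphaL_bdL a hidem, hc, map_zero]

theorem range_bdL_le_comap_alphaL (hidem : ∀ (r : Fin k) (x : X), ops r x x = x) (n : ℕ) :
    LinearMap.range (bdL ops a n) ≤ (LinearMap.range (bdL ops a n)).comap (alphaL n) := by
  rintro _ ⟨c, rfl⟩
  exact ⟨alphaL (n + 1) c, (alphaL_bdL a hidem c).symm⟩

theorem nonempty_HC_equiv_HD_prod_HN (hidem : ∀ (r : Fin k) (x : X), ops r x x = x) (n : ℕ) :
    Nonempty (HC ops a n ≃ₗ[ℤ] HD ops a n × HN ops a n) := by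
  have hsplit := nonempty_quotient_equiv_prod_of_isIdempotentElem (isIdempotentElem_alphaL n)
    (ZC_le_comap_alphaL a hidem n) (range_bdL_le_comap_alphaL a hidem n)
  rwa [← ZD_eq_inf_ker, ← ZN_eq_comap a hidem, ← map_bdL_Dsub a hidem, ker_alphaL] at hsplit

end Homology

theorem alpha_splits_normalized_general {X : Type*} {k : ℕ}
    (ops : Fin k → X → X → X) (a : Fin k → ℤ)
    (hidem : ∀ (r : Fin k) (x : X), ops r x x = x) :
    (∀ (n : ℕ) (c : CC X n), c ∈ Dsub n → alphaL n c = 0) ∧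
    (∀ n : ℕ, (alphaL n).comp (bdL ops a n) = (bdL ops a n).comp (alphaL (n+1))) ∧
    (∀ (n : ℕ) (c : CC X n), (Dsub n).mkQ (alphaL n c) = (Dsub n).mkQ c) ∧
    (∀ n : ℕ, Nonempty (HC ops a n ≃ₗ[ℤ] HD ops a n × HN ops a n)) := by
  refine ⟨fun n c hc => ?_, fun n => ?_, fun n c => ?_, nonempty_HC_equiv_HD_prod_HN a hidem⟩
  · rwa [← ker_alphaL] at hc
  · exact LinearMap.ext fun c => alphaL_bdL a hidem c
  · exact (Submodule.Quotient.eq _).2 (alphaL_sub_self_mem_Dsub c)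

/-- for a multispindle `X`, `α(x₀,…,xₙ) = (x₀,x₁−x₀,…,xₙ−x_{n−1})`
vanishes on the degenerate subcomplex, is a chain map, and splits the quotient
`β : C(X) → C^N(X) = C(X)/C^D(X)`; consequently `Hₙ(X) ≅ Hₙ^D(X) ⊕ Hₙ^N(X)`. -/
theorem alpha_splits_normalized {X : Type*} {k : ℕ}
    (ops : Fin k → X → X → X) (a : Fin k → ℤ)
    (hidem : ∀ (r : Fin k) (x : X), ops r x x = x)
    (hdist : ∀ (r s : Fin k) (x y z : X),
      ops r (ops s x y) z = ops s (ops r x z) (ops r y z)) :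
    (∀ (n : ℕ) (c : CC X n), c ∈ Dsub n → alphaL n c = 0) ∧
    (∀ n : ℕ, (alphaL n).comp (bdL ops a n) = (bdL ops a n).comp (alphaL (n+1))) ∧
    (∀ (n : ℕ) (c : CC X n), (Dsub n).mkQ (alphaL n c) = (Dsub n).mkQ c) ∧
    (∀ n : ℕ, Nonempty (HC ops a n ≃ₗ[ℤ] HD ops a n × HN ops a n)) :=
  alpha_splits_normalized_general ops a hidem
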